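/- arXiv:2412.10786 — 2 statements merged into one kernel-verified Lean document; each statement's English description precedes it below -/
import Mathlib

section
/- Let T ≥ 1, let V be a vector space over ℝ, let σ : {0,…,T} → ℝ be strictly decreasing with σ_T > 0, let D_0,…,D_{T−1} ∈ V, and let x̂_0, …, x̂_T in V satisfy x̂_{i+1} = (σ_{i+1}/σ_i)·x̂_i + (1 − σ_{i+1}/σ_i)·D_i for all 0 ≤ i < T. Suppose the initial point is x̂_0 = x + σ_0·ε for some x, ε ∈ V, and let the target point be x + σ_T·ε′ for some ε′ ∈ V. Then x̂_T − (x + σ_T·ε′) = Σ_{i=0}^{T−1} λ_i·(D_i − x) + σ_T·(ε − ε′), where λ_i = σ_T/σ_{i+1} − σ_T/σ_i. -/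
/-- Decomposition of the discretization error of a first-order diffusion ODE sampler
into a weighted sum of per-step denoising errors plus a noise term. -/
theorem euler_sampler_error_decomposition
    (T : ℕ) (hT : 1 ≤ T) (V : Type*) [AddCommGroup V] [Module ℝ V]
    (σ : ℕ → ℝ)
    (hσ_anti : ∀ i j : ℕ, i < j → j ≤ T → σ j < σ i)
    (hσT : 0 < σ T)
    (D : ℕ → V) (xhat : ℕ → V)
    (hrec : ∀ i : ℕ, i < T →
      xhat (i + 1) = (σ (i + 1) / σ i) • xhat i + (1 - σ (i + 1) / σ i) • D i)
    (x ε ε' : V)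
    (hinit : xhat 0 = x + σ 0 • ε) :
    xhat T - (x + σ T • ε') =
      (∑ i ∈ Finset.range T, (σ T / σ (i + 1) - σ T / σ i) • (D i - x))
        + σ T • (ε - ε') := by
  have hpos : ∀ k, k ≤ T → σ k ≠ 0 := by
    intro k hk
    rcases Nat.lt_or_eq_of_le hk with h | h
    · exact (hσT.trans (hσ_anti k T h le_rfl)).ne'
    · rw [h]; exact hσT.ne'
  have key : ∀ k, k ≤ T → (σ T / σ k) • (xhat k - x) =
      (∑ i ∈ Finset.range k, (σ T / σ (i + 1) - σ T / σ i) • (D i - x)) + σ T • ε := by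
    intro k
    induction k with
    | zero =>
      intro _
      have h0 := hpos 0 (Nat.zero_le _)
      rw [hinit, Finset.sum_range_zero, zero_add, add_sub_cancel_left, smul_smul,
        div_mul_cancel₀ _ h0]
    | succ k ih =>
      intro hk
      have h0 := hpos k (by omega)
      have h1 := hpos (k + 1) hk
      rw [Finset.sum_range_succ, add_right_comm, ← ih (by omega), hrec k (by omega)]
      match_scalars <;> field_simp
      ring
  have h := key T le_rfl
  rw [div_self hσT.ne', one_smul] at h
  rw [← sub_sub, h, smul_sub]
  abel
end

section
/- Let T ≥ 1, let H be a real inner product space, let σ : {0,…,T} → ℝ be strictly decreasing with σ_T > 0, let D_0,…,D_{T−1} ∈ H, and let x̂_0, …, x̂_T in H satisfy x̂_{i+1} = (σ_{i+1}/σ_i)·x̂_i + (1 − σ_{i+1}/σ_i)·D_i for all 0 ≤ i < T, with x̂_0 = x + σ_0·ε for some x, ε ∈ H and target x + σ_T·ε′ for some ε′ ∈ H. Then, with λ_i = σ_T/σ_{i+1} − σ_T/σ_i, the discretization error satisfies ‖x̂_T − (x + σ_T·ε′)‖² ≤ 2·Σ_{i=0}^{T−1} λ_i·‖D_i − x‖²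 + 2·σ_T²·‖ε − ε′‖². -/
/-- Discretization-loss upper bound: the squared error of a first-order diffusion
ODE sampler is bounded by a weighted sum of per-step denoising losses plus a noise term. -/
theorem euler_sampler_discretization_loss_upper_bound
    (T : ℕ) (hT : 1 ≤ T)
    (H : Type*) [NormedAddCommGroup H] [InnerProductSpace ℝ H]
    (σ : ℕ → ℝ)
    (hσ_anti : ∀ i j : ℕ, i < j → j ≤ T → σ j < σ i)
    (hσT : 0 < σ T)
    (D : ℕ → H) (xhat : ℕ → H)
    (hrec : ∀ i : ℕ, i < T →
      xhat (i + 1) = (σ (i + 1) / σ i) • xhat i + (1 - σ (i + 1) / σ i) • D i)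
    (x ε ε' : H)
    (hinit : xhat 0 = x + σ 0 • ε) :
    ‖xhat T - (x + σ T • ε')‖ ^ 2 ≤
      2 * (∑ i ∈ Finset.range T, (σ T / σ (i + 1) - σ T / σ i) * ‖D i - x‖ ^ 2)
        + 2 * σ T ^ 2 * ‖ε - ε'‖ ^ 2 := by
  have hpos : ∀ k, k ≤ T → 0 < σ k := by
    intro k hk
    rcases Nat.lt_or_eq_of_le hk with h | h
    · exact hσT.trans (hσ_anti k T h le_rfl)
    · rw [h]; exact hσT
  have conv : ∀ (r : ℝ) (a b : H), 0 ≤ r → r ≤ 1 →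
      ‖r • a + (1 - r) • b‖ ^ 2 ≤ r * ‖a‖ ^ 2 + (1 - r) * ‖b‖ ^ 2 := by
    intro r a b h0 h1
    have h : ‖r • a + (1 - r) • b‖ ≤ r * ‖a‖ + (1 - r) * ‖b‖ := by
      refine (norm_add_le _ _).trans ?_
      rw [norm_smul, norm_smul, Real.norm_of_nonneg h0, Real.norm_of_nonneg (sub_nonneg.2 h1)]
    have h2 := pow_le_pow_left₀ (norm_nonneg _) h 2
    nlinarith [mul_nonneg (mul_nonneg h0 (sub_nonneg.2 h1)) (sq_nonneg (‖a‖ - ‖b‖))]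
  have key : ∀ k, k ≤ T → ‖xhat k - x - σ k • ε‖ ^ 2 ≤
      ∑ i ∈ Finset.range k, (σ k / σ (i + 1) - σ k / σ i) * ‖D i - x‖ ^ 2 := by
    intro k
    induction k with
    | zero => intro _; simp [hinit]
    | succ k ih =>
      intro hk
      have p0 := hpos k (by omega)
      have p1 := hpos (k + 1) hk
      have ih := ih (by omega)
      have hr0 : 0 ≤ σ (k + 1) / σ k := by positivity
      have hr1 : σ (k + 1) / σ k ≤ 1 :=
        (div_le_one p0).2 (hσ_anti k (k + 1) (by omega) hk).le
      have e : xhat (k + 1) - x - σ (k + 1) • ε =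
          (σ (k + 1) / σ k) • (xhat k - x - σ k • ε) + (1 - σ (k + 1) / σ k) • (D k - x) := by
        have hs : σ (k + 1) • ε = (σ (k + 1) / σ k) • σ k • ε := by
          rw [smul_smul, div_mul_cancel₀ _ p0.ne']
        rw [hrec k (by omega), hs]
        module
      rw [e, Finset.sum_range_succ, div_self p1.ne']
      refine (conv _ _ _ hr0 hr1).trans ?_
      gcongr
      refine (mul_le_mul_of_nonneg_left ih hr0).trans (le_of_eq ?_)
      rw [Finset.mul_sum]
      refine Finset.sum_congr rfl fun i _ => ?_
      have : ∀ c : ℝ, σ (k + 1) / σ k * (σ k / c) = σ (k + 1) / c := by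
        intro c
        rw [← mul_div_assoc, div_mul_cancel₀ _ p0.ne']
      rw [← mul_assoc, mul_sub, this, this]
  have hk := key T le_rfl
  have e : xhat T - (x + σ T • ε') = (xhat T - x - σ T • ε) + σ T • (ε - ε') := by
    module
  have h1 := pow_le_pow_left₀ (norm_nonneg _)
    (norm_add_le (xhat T - x - σ T • ε) (σ T • (ε - ε'))) 2
  rw [← e] at h1
  have h2 : ‖σ T • (ε - ε')‖ ^ 2 = σ T ^ 2 * ‖ε - ε'‖ ^ 2 := by
    rw [norm_smul, mul_pow, Real.norm_of_nonneg hσT.le]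
  nlinarith [sq_nonneg (‖xhat T - x - σ T • ε‖ - ‖σ T • (ε - ε')‖)]
end
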